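/- Fix T > 0, matrices A ∈ ℝ^{n×n}, B ∈ ℝ^{n×p}, E_ℓ ∈ ℝ^{n×m_ℓ} (ℓ = 1,…,m), x₀ ∈ ℝⁿ, u₀ ∈ ℝᵖ, continuous demands v_ℓ : ℝ → ℝ^{m_ℓ} vanishing on (−∞,0], continuous hold functions ξ_{i,k} : ℝ → ℝᵖ, a constraint matrix C ∈ ℝ^{q×n} with rows C_z and right-hand side d ∈ ℝ^q, continuously differentiable sensitivities h_ℓ : ℝ → ℝ, and ε > 0. Define x̄₀(t) = exp(At)x₀ + ∫₀ᵗ exp(A(t−β))Bu₀ dβ, x̄ᵘ_{i,k}(t) = ∫₀ᵗ exp(A(t−β))Bξ_{i,k}(β) dβ, x̄ᵛ_ℓ(s) = ∫₀ˢ exp(A(s−β))E_ℓ v_ℓ(β) dβ (zero for s < 0), and x(t; τ, α) = x̄₀(t) + Σ_{k,i} α_{i,k} x̄ᵘ_{i,k}(t) + Σ_ℓ x̄ᵛ_ℓ(t−τ_ℓ). On an open set of parameters (τ, α) where −C_z x(t; τ, α) + d_z > 0 for all z and all t ∈ [0,T], the barrier-augmented cost J(τ, α) = Σ_ℓ h_ℓ(τ_ℓ)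 − Σ_z ∫₀ᵀ ε·log(−C_z x(t; τ, α) + d_z) dt is continuously differentiable, and its partial derivative with respect to τ_ℓ equals h_ℓ'(τ_ℓ) + Σ_z ∫₀ᵀ ε·(−C_z(A x̄ᵛ_ℓ(t−τ_ℓ) + E_ℓ v_ℓ(t−τ_ℓ)))/(−C_z x(t; τ, α) + d_z) dt. -/

import Mathlib

open Matrix MeasureTheory Set

/-- `x̄₀(t) = exp(At)·x₀ + ∫₀ᵗ exp(A(t−β))·B·u₀ dβ`. -/
noncomputable def xbar0 {n p : ℕ} (A : Matrix (Fin n) (Fin n) ℝ)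
    (B : Matrix (Fin n) (Fin p) ℝ) (x₀ : Fin n → ℝ) (u₀ : Fin p → ℝ) (t : ℝ) : Fin n → ℝ :=
  (NormedSpace.exp (t • A)).mulVec x₀ +
    ∫ β in (0:ℝ)..t, (NormedSpace.exp ((t - β) • A)).mulVec (B.mulVec u₀)

/-- `x̄ᵘ(t) = ∫₀ᵗ exp(A(t−β))·B·ξ(β) dβ`. -/
noncomputable def xbaru {n p : ℕ} (A : Matrix (Fin n) (Fin n) ℝ)
    (B : Matrix (Fin n) (Fin p) ℝ) (ξ : ℝ → Fin p → ℝ) (t : ℝ) : Fin n → ℝ :=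
  ∫ β in (0:ℝ)..t, (NormedSpace.exp ((t - β) • A)).mulVec (B.mulVec (ξ β))

/-- `x̄ᵛ(s) = ∫₀ˢ exp(A(s−β))·E·v(β) dβ`, extended by `0` for `s < 0`. -/
noncomputable def xbarv {n m : ℕ} (A : Matrix (Fin n) (Fin n) ℝ)
    (E : Matrix (Fin n) (Fin m) ℝ) (v : ℝ → Fin m → ℝ) (s : ℝ) : Fin n → ℝ :=
  if 0 ≤ s then
    ∫ β in (0:ℝ)..s, (NormedSpace.exp ((s - β) • A)).mulVec (E.mulVec (v β))
  else 0

/-- The parametrized state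
`x(t; τ, α) = x̄₀(t) + Σ_{i,k} α_{i,k} x̄ᵘ_{i,k}(t) + Σ_ℓ x̄ᵛ_ℓ(t−τ_ℓ)`. -/
noncomputable def xstate {n p m K : ℕ} (A : Matrix (Fin n) (Fin n) ℝ)
    (B : Matrix (Fin n) (Fin p) ℝ) (x₀ : Fin n → ℝ) (u₀ : Fin p → ℝ)
    (md : Fin m → ℕ) (E : ∀ ℓ, Matrix (Fin n) (Fin (md ℓ)) ℝ)
    (v : ∀ ℓ, ℝ → Fin (md ℓ) → ℝ) (ξ : Fin p → Fin K → ℝ → Fin p → ℝ)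
    (τ : Fin m → ℝ) (α : Fin p → Fin K → ℝ) (t : ℝ) : Fin n → ℝ :=
  xbar0 A B x₀ u₀ t + (∑ i, ∑ k, α i k • xbaru A B (ξ i k) t) +
    ∑ ℓ, xbarv A (E ℓ) (v ℓ) (t - τ ℓ)

/-- The barrier-augmented cost
`J(τ,α) = Σ_ℓ h_ℓ(τ_ℓ) − Σ_z ∫₀ᵀ ε log(−C_z x(t;τ,α) + d_z) dt`. -/
noncomputable def Jbarrier {n p m K q : ℕ} (T : ℝ) (A : Matrix (Fin n) (Fin n) ℝ)
    (B : Matrix (Fin n) (Fin p) ℝ) (x₀ : Fin n → ℝ) (u₀ : Fin p → ℝ)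
    (md : Fin m → ℕ) (E : ∀ ℓ, Matrix (Fin n) (Fin (md ℓ)) ℝ)
    (v : ∀ ℓ, ℝ → Fin (md ℓ) → ℝ) (ξ : Fin p → Fin K → ℝ → Fin p → ℝ)
    (C : Matrix (Fin q) (Fin n) ℝ) (d : Fin q → ℝ) (h : Fin m → ℝ → ℝ) (ε : ℝ)
    (τ : Fin m → ℝ) (α : Fin p → Fin K → ℝ) : ℝ :=
  (∑ ℓ, h ℓ (τ ℓ)) - ∑ z, ∫ t in (0:ℝ)..T,
    ε * Real.log (-(C z ⬝ᵥ xstate A B x₀ u₀ md E v ξ τ α t) + d z)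

/-!
Each of `x̄₀`, `x̄ᵘ`, `x̄ᵛ` solves a linear equation `ẏ = A y + w` with `w` continuous, hence is
`C¹`; for `x̄ᵛ` this holds across `s = 0` because the demand vanishes on `(-∞, 0]`. The state
`x(t; τ, α)` is therefore jointly `C¹` in `(τ, α)` and `t`, and so is the barrier integrand near
`{(τ, α)} × [0, T]` for a strictly feasible `(τ, α)`. As `[0, T]` is compact, one may differentiate
under the integral sign, where `∂x/∂τ_ℓ = -(x̄ᵛ_ℓ)'(t - τ_ℓ)`.
-/

open Filter Function
open scoped Topology Interval

lemma tendstoUniformlyOn_of_continuousOn_uncurry {X Y Z : Type*} [TopologicalSpace X]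
    [TopologicalSpace Y] [UniformSpace Z] {f : X → Y → Z} {s : Set X} {k : Set Y} {x : X}
    (hk : IsCompact k) (hf : ContinuousOn (uncurry f) (s ×ˢ k)) (hx : x ∈ s) :
    TendstoUniformlyOn f (f x) (𝓝[s] x) k := by
  intro u hu
  obtain ⟨w, hw, hwu⟩ := hk.mem_uniformity_of_prod hf hx (symm_le_uniformity hu)
  exact mem_of_superset hw fun y hy t ht => hwu y hy t ht

lemma continuousOn_intervalIntegral_of_continuousOn_uncurry {X E : Type*} [TopologicalSpace X]
    [FirstCountableTopology X] [NormedAddCommGroup E] [NormedSpace ℝ E] {f : X → ℝ → E}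
    {s : Set X} {a b : ℝ} (hf : ContinuousOn (uncurry f) (s ×ˢ [[a, b]])) :
    ContinuousOn (fun x => ∫ t in a..b, f x t) s := fun _ hx =>
  (tendstoUniformlyOn_of_continuousOn_uncurry isCompact_uIcc hf
    hx).tendsto_intervalIntegral_of_continuousOn <|
      eventually_mem_nhdsWithin.mono fun y hy => hf.uncurry_left y hy

lemma hasFDerivAt_intervalIntegral_of_continuousOn {𝕜 P E : Type*} [RCLike 𝕜]
    [NormedAddCommGroup P] [NormedSpace 𝕜 P] [NormedAddCommGroup E] [NormedSpace ℝ E]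
    [NormedSpace 𝕜 E] {F : P → ℝ → E} {F' : P → ℝ → P →L[𝕜] E} {U : Set P} {x₀ : P} {a b : ℝ}
    (hU : U ∈ 𝓝 x₀) (hF : ∀ x ∈ U, ContinuousOn (F x) [[a, b]])
    (hF' : ContinuousOn (uncurry F') (U ×ˢ [[a, b]]))
    (hderiv : ∀ x ∈ U, ∀ t ∈ [[a, b]], HasFDerivAt (F · t) (F' x t) x) :
    HasFDerivAt (fun x => ∫ t in a..b, F x t) (∫ t in a..b, F' x₀ t) x₀ := by
  have hx₀ : x₀ ∈ U := mem_of_mem_nhds hU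
  have hF'x₀ : ContinuousOn (F' x₀) [[a, b]] := hF'.uncurry_left x₀ hx₀
  obtain ⟨M, hM⟩ := isCompact_uIcc.exists_bound_of_continuousOn hF'x₀
  have hbound : ∀ᶠ x in 𝓝 x₀, ∀ t ∈ [[a, b]], ‖F' x t‖ ≤ M + 1 := by
    have hunif := tendstoUniformlyOn_of_continuousOn_uncurry isCompact_uIcc hF' hx₀
    rw [nhdsWithin_eq_nhds.2 hU] at hunif
    exact (uniformContinuous_norm.comp_tendstoUniformlyOn hunif).eventually_forall_le
      (lt_add_one M) hM
  exact intervalIntegral.hasFDerivAt_integral_of_dominated_of_fderiv_le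
    (bound := fun _ => M + 1) (inter_mem hU hbound)
    (eventually_of_mem hU fun x hx =>
      (hF x hx).intervalIntegrable.def'.aestronglyMeasurable) (hF x₀ hx₀).intervalIntegrable
    hF'x₀.intervalIntegrable.def'.aestronglyMeasurable
    (.of_forall fun t ht x hx => hx.2 t (uIoc_subset_uIcc ht)) intervalIntegrable_const
    (.of_forall fun t ht x hx => hderiv x hx.1 t (uIoc_subset_uIcc ht))

section PartialDerivative

variable {P Q E : Type*} [NormedAddCommGroup P] [NormedSpace ℝ P] [NormedAddCommGroup Q]
  [NormedSpace ℝ Q] [NormedAddCommGroup E] [NormedSpace ℝ E] {F : P → Q → E}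

lemma hasFDerivAt_left_of_contDiffAt {x : P} {t : Q} (hF : ContDiffAt ℝ 1 (uncurry F) (x, t)) :
    HasFDerivAt (F · t) (fderiv ℝ (F · t) x) x :=
  have hslice : ContDiffAt ℝ 1 (F · t) x :=
    ContDiffAt.comp (g := uncurry F) (f := fun x => (x, t)) x hF (by fun_prop)
  (hslice.differentiableAt one_ne_zero).hasFDerivAt

lemma continuousAt_fderiv_left_of_contDiffAt {y : P × Q} (hF : ContDiffAt ℝ 1 (uncurry F) y) :
    ContinuousAt (uncurry fun x t => fderiv ℝ (F · t) x) y := by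
  have hswap : ContDiffAt ℝ 1 (uncurry fun (y : P × Q) x => F x y.2) (y, y.1) :=
    ContDiffAt.comp (g := uncurry F) (f := fun q : (P × Q) × P => (q.2, q.1.2)) (y, y.1) hF
      (by fun_prop)
  exact (hswap.fderiv (m := 0) contDiffAt_fst (by simp)).continuousAt

lemma continuousOn_fderiv_left_of_contDiffAt {s : Set P} {k : Set Q}
    (hF : ∀ x ∈ s, ∀ t ∈ k, ContDiffAt ℝ 1 (uncurry F) (x, t)) :
    ContinuousOn (uncurry fun x t => fderiv ℝ (F · t) x) (s ×ˢ k) := fun y hy =>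
  (continuousAt_fderiv_left_of_contDiffAt (hF y.1 hy.1 y.2 hy.2)).continuousWithinAt

lemma eventually_forall_mem_contDiffAt {x₀ : P} {k : Set Q} (hk : IsCompact k)
    (hF : ∀ t ∈ k, ContDiffAt ℝ 1 (uncurry F) (x₀, t)) :
    ∀ᶠ x in 𝓝 x₀, ∀ t ∈ k, ContDiffAt ℝ 1 (uncurry F) (x, t) :=
  hk.eventually_forall_of_forall_eventually fun t ht => (hF t ht).eventually (by simp)

end PartialDerivative

section ParametricIntegral

variable {P E : Type*} [NormedAddCommGroup P] [NormedSpace ℝ P] [NormedAddCommGroup E]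
  [NormedSpace ℝ E] {F : P → ℝ → E} {x₀ : P} {a b : ℝ}

lemma hasFDerivAt_intervalIntegral_of_contDiffAt
    (hF : ∀ t ∈ [[a, b]], ContDiffAt ℝ 1 (uncurry F) (x₀, t)) :
    HasFDerivAt (fun x => ∫ t in a..b, F x t) (∫ t in a..b, fderiv ℝ (F · t) x₀) x₀ := by
  refine hasFDerivAt_intervalIntegral_of_continuousOn (F' := fun x t => fderiv ℝ (F · t) x)
    (eventually_forall_mem_contDiffAt isCompact_uIcc hF) (fun x hx t ht => ?_)
    (continuousOn_fderiv_left_of_contDiffAt fun _ hx => hx)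
    (fun x hx t ht => hasFDerivAt_left_of_contDiffAt (hx t ht))
  exact (ContinuousAt.comp (g := uncurry F) (f := fun t => (x, t)) (hx t ht).continuousAt
    (by fun_prop)).continuousWithinAt

theorem contDiffAt_one_intervalIntegral
    (hF : ∀ t ∈ [[a, b]], ContDiffAt ℝ 1 (uncurry F) (x₀, t)) :
    ContDiffAt ℝ 1 (fun x => ∫ t in a..b, F x t) x₀ :=
  contDiffAt_one_iff.2 ⟨_, _, eventually_forall_mem_contDiffAt isCompact_uIcc hF,
    continuousOn_intervalIntegral_of_continuousOn_uncurry
      (continuousOn_fderiv_left_of_contDiffAt fun _ hx => hx),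
    fun _ hx => hasFDerivAt_intervalIntegral_of_contDiffAt hx⟩

theorem hasDerivAt_intervalIntegral_of_contDiffAt {f : ℝ → ℝ → E} {f' : ℝ → E} {s : ℝ}
    (hf : ∀ t ∈ [[a, b]], ContDiffAt ℝ 1 (uncurry f) (s, t))
    (hf' : ∀ t ∈ [[a, b]], HasDerivAt (f · t) (f' t) s) :
    HasDerivAt (fun r => ∫ t in a..b, f r t) (∫ t in a..b, f' t) s := by
  have hcont : ContinuousOn (fun t => fderiv ℝ (f · t) s) [[a, b]] :=
    ContinuousOn.uncurry_left (f := fun x t => fderiv ℝ (f · t) x) s (mem_singleton s)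
      (continuousOn_fderiv_left_of_contDiffAt (by simpa using hf))
  refine (hasFDerivAt_intervalIntegral_of_contDiffAt hf).hasDerivAt.congr_deriv ?_
  rw [ContinuousLinearMap.intervalIntegral_apply hcont.intervalIntegrable]
  exact intervalIntegral.integral_congr fun t ht => (hf' t ht).deriv

end ParametricIntegral

lemma hasDerivAt_sum_update {𝕜 ι E : Type*} [NontriviallyNormedField 𝕜] [NormedAddCommGroup E]
    [NormedSpace 𝕜 E] [Fintype ι] [DecidableEq ι] {g : ι → 𝕜 → E} {g' : E} {τ : ι → 𝕜} {i : ι}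
    (hg : HasDerivAt (g i) g' (τ i)) :
    HasDerivAt (fun s => ∑ j, g j (update τ i s j)) g' (τ i) := by
  have hsplit (s : 𝕜) : ∑ j, g j (update τ i s j) = g i s + ∑ j ∈ {i}ᶜ, g j (τ j) := by
    rw [Fintype.sum_eq_add_sum_compl i, update_self]
    congr 1
    refine Finset.sum_congr rfl fun j hj => ?_
    rw [update_of_ne (by simpa using hj)]
  simpa only [hsplit] using hg.add_const _

section LogBarrier

variable {ι : Type*} [Fintype ι] {c : ι → ℝ} {δ ε a b : ℝ}

lemma contDiffAt_mul_log_neg_dotProduct_add {P : Type*} [NormedAddCommGroup P] [NormedSpace ℝ P]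
    {X : P → ι → ℝ} {x : P} (hX : ContDiffAt ℝ 1 X x) (hpos : 0 < -(c ⬝ᵥ X x) + δ) :
    ContDiffAt ℝ 1 (fun y => ε * Real.log (-(c ⬝ᵥ X y) + δ)) x := by
  have hdot : ContDiffAt ℝ 1 (fun y => c ⬝ᵥ X y) x := by
    unfold dotProduct
    fun_prop
  exact contDiffAt_const.mul ((hdot.neg.add contDiffAt_const).log hpos.ne')

lemma hasDerivAt_mul_log_neg_dotProduct_add {X : ℝ → ι → ℝ} {X' : ι → ℝ} {s : ℝ}
    (hX : HasDerivAt X X' s) (hpos : 0 < -(c ⬝ᵥ X s) + δ) :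
    HasDerivAt (fun r => ε * Real.log (-(c ⬝ᵥ X r) + δ))
      (ε * (-(c ⬝ᵥ X')) / (-(c ⬝ᵥ X s) + δ)) s := by
  have hdot : HasDerivAt (fun r => c ⬝ᵥ X r) (c ⬝ᵥ X') s :=
    HasDerivAt.fun_sum fun j _ => (hasDerivAt_pi.1 hX j).const_mul (c j)
  rw [mul_div_assoc]
  exact ((hdot.fun_neg.add_const δ).log hpos.ne').const_mul ε

theorem contDiffAt_integral_log_barrier {P : Type*} [NormedAddCommGroup P] [NormedSpace ℝ P]
    {X : P → ℝ → ι → ℝ} {x : P} (hX : ∀ t ∈ [[a, b]], ContDiffAt ℝ 1 (uncurry X) (x, t))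
    (hpos : ∀ t ∈ [[a, b]], 0 < -(c ⬝ᵥ X x t) + δ) :
    ContDiffAt ℝ 1 (fun y => ∫ t in a..b, ε * Real.log (-(c ⬝ᵥ X y t) + δ)) x :=
  contDiffAt_one_intervalIntegral fun t ht =>
    contDiffAt_mul_log_neg_dotProduct_add (hX t ht) (hpos t ht)

theorem hasDerivAt_integral_log_barrier {X : ℝ → ℝ → ι → ℝ} {X' : ℝ → ι → ℝ} {s : ℝ}
    (hX : ∀ t ∈ [[a, b]], ContDiffAt ℝ 1 (uncurry X) (s, t))
    (hX' : ∀ t ∈ [[a, b]], HasDerivAt (X · t) (X' t) s)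
    (hpos : ∀ t ∈ [[a, b]], 0 < -(c ⬝ᵥ X s t) + δ) :
    HasDerivAt (fun r => ∫ t in a..b, ε * Real.log (-(c ⬝ᵥ X r t) + δ))
      (∫ t in a..b, ε * (-(c ⬝ᵥ X' t)) / (-(c ⬝ᵥ X s t) + δ)) s :=
  hasDerivAt_intervalIntegral_of_contDiffAt
    (fun t ht => contDiffAt_mul_log_neg_dotProduct_add (hX t ht) (hpos t ht))
    fun t ht => hasDerivAt_mul_log_neg_dotProduct_add (hX' t ht) (hpos t ht)

end LogBarrier

section ForcedResponse

variable {𝕜 ι κ : Type*} [NontriviallyNormedField 𝕜] [Fintype ι]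

lemma hasDerivAt_mulVec {M : 𝕜 → Matrix κ ι 𝕜} {M' : Matrix κ ι 𝕜} {u : 𝕜 → ι → 𝕜}
    {u' : ι → 𝕜} {s : 𝕜} (hM : ∀ i j, HasDerivAt (M · i j) (M' i j) s) (hu : HasDerivAt u u' s) :
    HasDerivAt (fun r => M r *ᵥ u r) (M' *ᵥ u s + M s *ᵥ u') s := by
  rw [hasDerivAt_pi]
  intro i
  simp only [mulVec, dotProduct, Pi.add_apply, ← Finset.sum_add_distrib]
  exact HasDerivAt.fun_sum fun j _ => (hM i j).mul (hasDerivAt_pi.1 hu j)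

lemma contDiff_one_of_hasDerivAt_mulVec_add {A : Matrix ι ι 𝕜} {w y : 𝕜 → ι → 𝕜}
    (hy : ∀ t, HasDerivAt y (A *ᵥ y t + w t) t) (hw : Continuous w) : ContDiff 𝕜 1 y := by
  have hdiff : Differentiable 𝕜 y := fun t => (hy t).differentiableAt
  refine contDiff_one_iff_deriv.2 ⟨hdiff, ?_⟩
  rw [funext fun t => (hy t).deriv]
  exact (continuous_const.matrix_mulVec hdiff.continuous).add hw

variable [DecidableEq ι] (A : Matrix ι ι ℝ) {w : ℝ → ι → ℝ}

open scoped Matrix.Norms.Operator in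
lemma hasDerivAt_exp_smul_mulVec {u : ℝ → ι → ℝ} {u' : ι → ℝ} {s : ℝ} (hu : HasDerivAt u u' s) :
    HasDerivAt (fun r => NormedSpace.exp (r • A) *ᵥ u r)
      (A *ᵥ (NormedSpace.exp (s • A) *ᵥ u s) + NormedSpace.exp (s • A) *ᵥ u') s := by
  have hexp := hasDerivAt_exp_smul_const' (𝕂 := ℝ) A s
  rw [mulVec_mulVec]
  exact hasDerivAt_mulVec (fun i j => hasDerivAt_pi.1 (hasDerivAt_pi.1 hexp i) j) hu

lemma exp_add_smul_mulVec (s t : ℝ) (y : ι → ℝ) :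
    NormedSpace.exp ((s + t) • A) *ᵥ y =
      NormedSpace.exp (s • A) *ᵥ (NormedSpace.exp (t • A) *ᵥ y) := by
  rw [mulVec_mulVec, ← Matrix.exp_add_of_commute _ _
    (((Commute.refl A).smul_left s).smul_right t), add_smul]

open scoped Matrix.Norms.Operator in
lemma continuous_exp_neg_smul_mulVec (hw : Continuous w) :
    Continuous fun β : ℝ => NormedSpace.exp ((-β) • A) *ᵥ w β :=
  (NormedSpace.exp_continuous.comp (continuous_neg.smul continuous_const)).matrix_mulVec hw

/-- The response at time `t` of the linear system `ẋ = A x + w` started from rest at time `0`. -/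
noncomputable def forcedResponse (A : Matrix ι ι ℝ) (w : ℝ → ι → ℝ) (t : ℝ) : ι → ℝ :=
  ∫ β in (0 : ℝ)..t, NormedSpace.exp ((t - β) • A) *ᵥ w β

lemma forcedResponse_eq_exp_mulVec_integral (hw : Continuous w) (t : ℝ) :
    forcedResponse A w t = NormedSpace.exp (t • A) *ᵥ
      ∫ β in (0 : ℝ)..t, NormedSpace.exp ((-β) • A) *ᵥ w β := by
  have hcomm := (NormedSpace.exp (t • A)).mulVecLin.toContinuousLinearMap.intervalIntegral_comp_comm
    ((continuous_exp_neg_smul_mulVec A hw).intervalIntegrable (μ := volume) 0 t)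
  simpa [forcedResponse, sub_eq_add_neg, exp_add_smul_mulVec] using hcomm

theorem hasDerivAt_forcedResponse (hw : Continuous w) (t : ℝ) :
    HasDerivAt (forcedResponse A w) (A *ᵥ forcedResponse A w t + w t) t := by
  have hintegral : HasDerivAt (fun r => ∫ β in (0 : ℝ)..r, NormedSpace.exp ((-β) • A) *ᵥ w β)
      (NormedSpace.exp ((-t) • A) *ᵥ w t) t :=
    (continuous_exp_neg_smul_mulVec A hw).integral_hasStrictDerivAt 0 t |>.hasDerivAt
  have hcancel : NormedSpace.exp (t • A) *ᵥ (NormedSpace.exp ((-t) • A) *ᵥ w t) = w t := by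
    rw [← exp_add_smul_mulVec, add_neg_cancel, zero_smul, NormedSpace.exp_zero, one_mulVec]
  rw [funext (forcedResponse_eq_exp_mulVec_integral A hw), ← hcancel]
  exact hasDerivAt_exp_smul_mulVec A hintegral

end ForcedResponse

section State

variable {n p : ℕ} (A : Matrix (Fin n) (Fin n) ℝ)

theorem hasDerivAt_xbar0 (B : Matrix (Fin n) (Fin p) ℝ) (x₀ : Fin n → ℝ) (u₀ : Fin p → ℝ)
    (t : ℝ) :
    HasDerivAt (xbar0 A B x₀ u₀) (A *ᵥ xbar0 A B x₀ u₀ t + B *ᵥ u₀) t := by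
  have hfree := hasDerivAt_exp_smul_mulVec A (hasDerivAt_const t x₀)
  have hforced := hasDerivAt_forcedResponse A (continuous_const (y := B *ᵥ u₀)) t
  refine (hfree.add hforced).congr_deriv ?_
  simp only [xbar0, forcedResponse, mulVec_zero, mulVec_add, add_zero, add_assoc]

theorem hasDerivAt_xbaru (B : Matrix (Fin n) (Fin p) ℝ) {ξ : ℝ → Fin p → ℝ} (hξ : Continuous ξ)
    (t : ℝ) : HasDerivAt (xbaru A B ξ) (A *ᵥ xbaru A B ξ t + B *ᵥ ξ t) t :=
  hasDerivAt_forcedResponse A (continuous_const.matrix_mulVec hξ) t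

lemma xbarv_eq_forcedResponse (E : Matrix (Fin n) (Fin p) ℝ) {v : ℝ → Fin p → ℝ}
    (hv0 : ∀ s ≤ (0 : ℝ), v s = 0) : xbarv A E v = forcedResponse A fun β => E *ᵥ v β := by
  funext s
  rcases le_or_gt 0 s with hs | hs
  · exact if_pos hs
  · rw [xbarv, if_neg hs.not_ge, forcedResponse, intervalIntegral.integral_zero_ae]
    refine .of_forall fun β hβ => ?_
    rw [uIoc_of_ge hs.le] at hβ
    rw [hv0 β hβ.2, mulVec_zero, mulVec_zero]

theorem hasDerivAt_xbarv (E : Matrix (Fin n) (Fin p) ℝ) {v : ℝ → Fin p → ℝ} (hv : Continuous v)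
    (hv0 : ∀ s ≤ (0 : ℝ), v s = 0) (s : ℝ) :
    HasDerivAt (xbarv A E v) (A *ᵥ xbarv A E v s + E *ᵥ v s) s := by
  rw [xbarv_eq_forcedResponse A E hv0]
  exact hasDerivAt_forcedResponse A (continuous_const.matrix_mulVec hv) s

variable {m K : ℕ} (B : Matrix (Fin n) (Fin p) ℝ) (x₀ : Fin n → ℝ) (u₀ : Fin p → ℝ)
  {md : Fin m → ℕ} (E : ∀ ℓ, Matrix (Fin n) (Fin (md ℓ)) ℝ) {v : ∀ ℓ, ℝ → Fin (md ℓ) → ℝ}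

theorem contDiff_one_xstate {ξ : Fin p → Fin K → ℝ → Fin p → ℝ} (hv : ∀ ℓ, Continuous (v ℓ))
    (hv0 : ∀ ℓ, ∀ s ≤ (0 : ℝ), v ℓ s = 0) (hξ : ∀ i k, Continuous (ξ i k)) :
    ContDiff ℝ 1 (uncurry fun (pr : (Fin m → ℝ) × (Fin p → Fin K → ℝ)) t =>
      xstate A B x₀ u₀ md E v ξ pr.1 pr.2 t) := by
  have h0 : ContDiff ℝ 1 (xbar0 A B x₀ u₀) :=
    contDiff_one_of_hasDerivAt_mulVec_add (hasDerivAt_xbar0 A B x₀ u₀) continuous_const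
  have hu (i k) : ContDiff ℝ 1 (xbaru A B (ξ i k)) :=
    contDiff_one_of_hasDerivAt_mulVec_add (hasDerivAt_xbaru A B (hξ i k))
      (continuous_const.matrix_mulVec (hξ i k))
  have hd (ℓ) : ContDiff ℝ 1 (xbarv A (E ℓ) (v ℓ)) :=
    contDiff_one_of_hasDerivAt_mulVec_add (hasDerivAt_xbarv A (E ℓ) (hv ℓ) (hv0 ℓ))
      (continuous_const.matrix_mulVec (hv ℓ))
  unfold xstate uncurry
  fun_prop

theorem hasDerivAt_xstate_update (ξ : Fin p → Fin K → ℝ → Fin p → ℝ) {ℓ : Fin m}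
    (hv : Continuous (v ℓ)) (hv0 : ∀ s ≤ (0 : ℝ), v ℓ s = 0) (τ : Fin m → ℝ)
    (α : Fin p → Fin K → ℝ) (t : ℝ) :
    HasDerivAt (fun s => xstate A B x₀ u₀ md E v ξ (update τ ℓ s) α t)
      (-(A *ᵥ xbarv A (E ℓ) (v ℓ) (t - τ ℓ) + E ℓ *ᵥ v ℓ (t - τ ℓ))) (τ ℓ) :=
  have hdelay := (hasDerivAt_xbarv A (E ℓ) hv hv0 (t - τ ℓ)).comp_const_sub t (τ ℓ)
  (hasDerivAt_sum_update (g := fun l s => xbarv A (E l) (v l) (t - s)) hdelay).const_add _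

end State

section Cost

variable {n p m K q : ℕ} {T : ℝ} {A : Matrix (Fin n) (Fin n) ℝ} {B : Matrix (Fin n) (Fin p) ℝ}
  {x₀ : Fin n → ℝ} {u₀ : Fin p → ℝ} {md : Fin m → ℕ} {E : ∀ ℓ, Matrix (Fin n) (Fin (md ℓ)) ℝ}
  {v : ∀ ℓ, ℝ → Fin (md ℓ) → ℝ} {ξ : Fin p → Fin K → ℝ → Fin p → ℝ}
  {C : Matrix (Fin q) (Fin n) ℝ} {d : Fin q → ℝ} {h : Fin m → ℝ → ℝ} (ε : ℝ) {τ : Fin m → ℝ}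
  {α : Fin p → Fin K → ℝ}

theorem contDiffAt_Jbarrier (hv : ∀ ℓ, Continuous (v ℓ))
    (hv0 : ∀ ℓ, ∀ s ≤ (0 : ℝ), v ℓ s = 0) (hξ : ∀ i k, Continuous (ξ i k))
    (hfeas : ∀ z, ∀ t ∈ [[0, T]], 0 < -(C z ⬝ᵥ xstate A B x₀ u₀ md E v ξ τ α t) + d z)
    (hh : ∀ ℓ, ContDiffAt ℝ 1 (h ℓ) (τ ℓ)) :
    ContDiffAt ℝ 1 (fun pr : (Fin m → ℝ) × (Fin p → Fin K → ℝ) =>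
      Jbarrier T A B x₀ u₀ md E v ξ C d h ε pr.1 pr.2) (τ, α) := by
  refine ContDiffAt.sub (ContDiffAt.sum fun ℓ _ => ?_) (ContDiffAt.sum fun z _ => ?_)
  · exact ContDiffAt.comp (g := h ℓ) (τ, α) (hh ℓ) (by fun_prop)
  · exact contDiffAt_integral_log_barrier
      (fun t _ => (contDiff_one_xstate A B x₀ u₀ E hv hv0 hξ).contDiffAt) (hfeas z)

theorem hasDerivAt_Jbarrier_update {ℓ : Fin m} (hv : ∀ ℓ, Continuous (v ℓ))
    (hv0 : ∀ ℓ, ∀ s ≤ (0 : ℝ), v ℓ s = 0) (hξ : ∀ i k, Continuous (ξ i k))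
    (hfeas : ∀ z, ∀ t ∈ [[0, T]], 0 < -(C z ⬝ᵥ xstate A B x₀ u₀ md E v ξ τ α t) + d z)
    (hh : DifferentiableAt ℝ (h ℓ) (τ ℓ)) :
    HasDerivAt (fun s => Jbarrier T A B x₀ u₀ md E v ξ C d h ε (update τ ℓ s) α)
      (deriv (h ℓ) (τ ℓ) + ∑ z, ∫ t in (0 : ℝ)..T,
        ε * (-(C z ⬝ᵥ (A *ᵥ xbarv A (E ℓ) (v ℓ) (t - τ ℓ) + E ℓ *ᵥ v ℓ (t - τ ℓ))))
          / (-(C z ⬝ᵥ xstate A B x₀ u₀ md E v ξ τ α t) + d z))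
      (τ ℓ) := by
  have hX : ContDiff ℝ 1 (uncurry fun s t => xstate A B x₀ u₀ md E v ξ (update τ ℓ s) α t) :=
    (contDiff_one_xstate A B x₀ u₀ E hv hv0 hξ).comp
      (f := fun y : ℝ × ℝ => ((update τ ℓ y.1, α), y.2))
      ((((contDiff_update 1 τ ℓ).comp contDiff_fst).prodMk contDiff_const).prodMk contDiff_snd)
  have hbarrier (z : Fin q) := hasDerivAt_integral_log_barrier (ε := ε) (fun t _ => hX.contDiffAt)
    (fun t _ => hasDerivAt_xstate_update A B x₀ u₀ E ξ (hv ℓ) (hv0 ℓ) τ α t)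
    (by simpa only [update_eq_self] using hfeas z)
  refine ((hasDerivAt_sum_update hh.hasDerivAt).sub
    (HasDerivAt.fun_sum fun z _ => hbarrier z)).congr_deriv ?_
  simp only [update_eq_self, dotProduct_neg, neg_neg, sub_eq_add_neg, mul_neg, neg_div,
    intervalIntegral.integral_neg, Finset.sum_neg_distrib]

theorem barrier_cost_tau_gradient_general (hv : ∀ ℓ, Continuous (v ℓ))
    (hv0 : ∀ ℓ, ∀ s ≤ (0 : ℝ), v ℓ s = 0) (hξ : ∀ i k, Continuous (ξ i k))
    (hfeas : ∀ z, ∀ t ∈ [[0, T]], 0 < -(C z ⬝ᵥ xstate A B x₀ u₀ md E v ξ τ α t) + d z)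
    (hh : ∀ ℓ, ContDiffAt ℝ 1 (h ℓ) (τ ℓ)) :
    ContDiffAt ℝ 1 (fun pr : (Fin m → ℝ) × (Fin p → Fin K → ℝ) =>
      Jbarrier T A B x₀ u₀ md E v ξ C d h ε pr.1 pr.2) (τ, α) ∧
    ∀ ℓ, HasDerivAt (fun s => Jbarrier T A B x₀ u₀ md E v ξ C d h ε (update τ ℓ s) α)
      (deriv (h ℓ) (τ ℓ) + ∑ z, ∫ t in (0 : ℝ)..T,
        ε * (-(C z ⬝ᵥ (A *ᵥ xbarv A (E ℓ) (v ℓ) (t - τ ℓ) + E ℓ *ᵥ v ℓ (t - τ ℓ))))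
          / (-(C z ⬝ᵥ xstate A B x₀ u₀ md E v ξ τ α t) + d z))
      (τ ℓ) :=
  ⟨contDiffAt_Jbarrier ε hv hv0 hξ hfeas hh, fun ℓ =>
    hasDerivAt_Jbarrier_update ε hv hv0 hξ hfeas ((hh ℓ).differentiableAt one_ne_zero)⟩

end Cost

/-- Lemma 1 (τ-gradient): on an open set of parameters where the state
constraints are strictly feasible, the barrier-augmented cost `J` is
continuously differentiable, and
`∂J/∂τ_ℓ = h_ℓ'(τ_ℓ) + Σ_z ∫₀ᵀ ε (−C_z(A x̄ᵛ_ℓ(t−τ_ℓ) + E_ℓ v_ℓ(t−τ_ℓ)))/(−C_z x(t;τ,α) + d_z) dt`. -/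
theorem barrier_cost_tau_gradient {n p m K q : ℕ} (T : ℝ) (hT : 0 < T)
    (A : Matrix (Fin n) (Fin n) ℝ) (B : Matrix (Fin n) (Fin p) ℝ)
    (x₀ : Fin n → ℝ) (u₀ : Fin p → ℝ)
    (md : Fin m → ℕ) (E : ∀ ℓ, Matrix (Fin n) (Fin (md ℓ)) ℝ)
    (v : ∀ ℓ, ℝ → Fin (md ℓ) → ℝ) (hv : ∀ ℓ, Continuous (v ℓ))
    (hv0 : ∀ ℓ, ∀ s ≤ (0:ℝ), v ℓ s = 0)
    (ξ : Fin p → Fin K → ℝ → Fin p → ℝ) (hξ : ∀ i k, Continuous (ξ i k))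
    (C : Matrix (Fin q) (Fin n) ℝ) (d : Fin q → ℝ)
    (h : Fin m → ℝ → ℝ) (hh : ∀ ℓ, ContDiff ℝ 1 (h ℓ))
    (ε : ℝ) (hε : 0 < ε)
    (Ω : Set ((Fin m → ℝ) × (Fin p → Fin K → ℝ))) (hΩ : IsOpen Ω)
    (hfeas : ∀ pr ∈ Ω, ∀ z, ∀ t ∈ Set.Icc (0:ℝ) T,
      0 < -(C z ⬝ᵥ xstate A B x₀ u₀ md E v ξ pr.1 pr.2 t) + d z) :
    ContDiffOn ℝ 1
      (fun pr : (Fin m → ℝ) × (Fin p → Fin K → ℝ) =>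
        Jbarrier T A B x₀ u₀ md E v ξ C d h ε pr.1 pr.2) Ω ∧
    ∀ pr ∈ Ω, ∀ ℓ : Fin m,
      HasDerivAt
        (fun s : ℝ => Jbarrier T A B x₀ u₀ md E v ξ C d h ε (Function.update pr.1 ℓ s) pr.2)
        (deriv (h ℓ) (pr.1 ℓ) + ∑ z, ∫ t in (0:ℝ)..T,
          ε * (-(C z ⬝ᵥ (A.mulVec (xbarv A (E ℓ) (v ℓ) (t - pr.1 ℓ)) +
                (E ℓ).mulVec (v ℓ (t - pr.1 ℓ)))))
            / (-(C z ⬝ᵥ xstate A B x₀ u₀ md E v ξ pr.1 pr.2 t) + d z))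
        (pr.1 ℓ) := by
  have hgrad := fun pr hpr => barrier_cost_tau_gradient_general ε hv hv0 hξ
    (uIcc_of_le hT.le ▸ hfeas pr hpr) fun ℓ => (hh ℓ).contDiffAt
  exact ⟨fun pr hpr => (hgrad pr hpr).1.contDiffWithinAt, fun pr hpr => (hgrad pr hpr).2⟩
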